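/- arXiv:1306.5786 — 7 statements merged into one kernel-verified Lean document; each statement's English description precedes it below -/
import Mathlib

section
/- Let m be a positive integer, let Y be an invertible m×m real matrix, and let Σr and Σc be symmetric positive definite m×m real matrices. Then l(Σr, Σc; Y) ≥ m² + m·log det(Y Yᵗ / m), i.e. tr(Σr⁻¹ Y Σc⁻¹ Yᵗ) + m·log det Σr + m·log det Σc ≥ m² + m·log det(Y Yᵗ / m). -/
open Matrix
open scoped MatrixOrder Matrix.Norms.L2Operator

lemma aux_trace_log (m : ℕ) (hm : 0 < m) (X : Matrix (Fin m) (Fin m) ℝ) (hX : X.PosDef) :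
    (m : ℝ) ^ 2 - (m : ℝ) ^ 2 * Real.log m + m * Real.log X.det ≤ X.trace := by
  have hm' : (0 : ℝ) < m := by exact_mod_cast hm
  have hpos := hX.eigenvalues_pos
  have hd : X.det = ∏ i, hX.1.eigenvalues i := by simpa using hX.1.det_eq_prod_eigenvalues
  have ht : X.trace = ∑ i, hX.1.eigenvalues i := by simpa using hX.1.trace_eq_sum_eigenvalues
  rw [hd, ht, Real.log_prod (fun i _ => (hpos i).ne'), Finset.mul_sum]
  have key : ∀ i ∈ Finset.univ, (m : ℝ) - m * Real.log m + m * Real.log (hX.1.eigenvalues i)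
      ≤ hX.1.eigenvalues i := by
    intro i _
    have h := Real.log_le_sub_one_of_pos (div_pos (hpos i) hm')
    rw [Real.log_div (hpos i).ne' hm'.ne'] at h
    have h2 := mul_le_mul_of_nonneg_left h hm'.le
    have h3 : (m : ℝ) * (hX.1.eigenvalues i / m - 1) = hX.1.eigenvalues i - m := by
      field_simp
    rw [h3] at h2
    linarith
  have := Finset.sum_le_sum key
  rw [Finset.sum_add_distrib] at this
  simp only [Finset.sum_const, Finset.card_univ, Fintype.card_fin, nsmul_eq_mul] at this
  linarith

/-- For a positive integer `m`, an invertible `m × m` real matrix `Y`, and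
symmetric positive definite matrices `Sr = Σr`, `Sc = Σc`, the scaled log-likelihood
`l(Σr, Σc; Y) = tr(Σr⁻¹ Y Σc⁻¹ Yᵗ) + m·log det Σr + m·log det Σc` is bounded below by
`m² + m·log det(Y Yᵗ / m)`. -/
theorem matrixNormal_scaledLogLik_lower_bound
    (m : ℕ) (hm : 0 < m) (Y Sr Sc : Matrix (Fin m) (Fin m) ℝ)
    (hY : IsUnit Y.det) (hSr : Sr.PosDef) (hSc : Sc.PosDef) :
    (Sr⁻¹ * Y * Sc⁻¹ * Yᵀ).trace + m * Real.log Sr.det + m * Real.log Sc.det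
      ≥ (m : ℝ) ^ 2 + m * Real.log (((m : ℝ)⁻¹ • (Y * Yᵀ)).det) := by
  have hm' : (0 : ℝ) < m := by exact_mod_cast hm
  have hr := hSr.det_pos
  have hc := hSc.det_pos
  have hy : Y.det ≠ 0 := hY.ne_zero
  obtain ⟨B, hB⟩ : ∃ B : Matrix (Fin m) (Fin m) ℝ, Sr⁻¹ = Bᴴ * B :=
    CStarAlgebra.nonneg_iff_eq_star_mul_self.mp hSr.inv.posSemidef.nonneg
  have hBd : B.det * B.det = Sr.det⁻¹ := by
    have := congrArg Matrix.det hB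
    rw [det_nonsing_inv, Ring.inverse_eq_inv'] at this
    simpa using this.symm
  have hW : (B * Y * Sc⁻¹ * (B * Y)ᴴ).PosSemidef :=
    hSc.inv.posSemidef.mul_mul_conjTranspose_same (B * Y)
  have hdet : (B * Y * Sc⁻¹ * (B * Y)ᴴ).det = Sr.det⁻¹ * Sc.det⁻¹ * (Y.det * Y.det) := by
    rw [← hBd]
    simp only [det_mul, det_nonsing_inv, Ring.inverse_eq_inv', det_conjTranspose, star_trivial]
    ring
  have hP := hW.posDef_iff_det_ne_zero.mpr (by rw [hdet]; positivity)
  have h := aux_trace_log m hm _ hP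
  have htr : (B * Y * Sc⁻¹ * (B * Y)ᴴ).trace = (Sr⁻¹ * Y * Sc⁻¹ * Yᵀ).trace := by
    rw [hB, conjTranspose_mul, ← Matrix.mul_assoc, trace_mul_comm]
    simp only [Matrix.mul_assoc, conjTranspose_eq_transpose_of_trivial]
  have hyy : Y.det * Y.det ≠ 0 := by positivity
  rw [htr, hdet, Real.log_mul (by positivity) hyy, Real.log_mul (by positivity) (by positivity),
    Real.log_inv, Real.log_inv] at h
  rw [det_smul, det_mul, det_transpose, Fintype.card_fin, Real.log_mul (by positivity) hyy,
    Real.log_pow, Real.log_inv]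
  linarith
end

section
/- Let m be a positive integer, let Y be an invertible m×m real matrix, and let Σc be a symmetric positive definite m×m real matrix. Then Y Σc⁻¹ Yᵗ / m is symmetric positive definite and l(Y Σc⁻¹ Yᵗ / m, Σc; Y) = m² + m·log det(Y Yᵗ / m); that is, the lower bound m² + m·log det(Y Yᵗ / m) for the scaled log-likelihood is attained at Σr = Y Σc⁻¹ Yᵗ / m. -/
open Matrix

/-- For a positive integer `m`, an invertible `m × m` real matrix `Y`, and a
symmetric positive definite matrix `Sc = Σc`, the matrix `Y Σc⁻¹ Yᵗ / m` is symmetric positive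
definite and the scaled log-likelihood
`l(Σr, Σc; Y) = tr(Σr⁻¹ Y Σc⁻¹ Yᵗ) + m·log det Σr + m·log det Σc` attains the value
`m² + m·log det(Y Yᵗ / m)` at `Σr = Y Σc⁻¹ Yᵗ / m`. -/
theorem matrixNormal_scaledLogLik_bound_attained
    (m : ℕ) (hm : 0 < m) (Y Sc : Matrix (Fin m) (Fin m) ℝ)
    (hY : IsUnit Y.det) (hSc : Sc.PosDef) :
    ((m : ℝ)⁻¹ • (Y * Sc⁻¹ * Yᵀ)).PosDef ∧
    (((m : ℝ)⁻¹ • (Y * Sc⁻¹ * Yᵀ))⁻¹ * Y * Sc⁻¹ * Yᵀ).trace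
        + m * Real.log ((m : ℝ)⁻¹ • (Y * Sc⁻¹ * Yᵀ)).det + m * Real.log Sc.det
      = (m : ℝ) ^ 2 + m * Real.log (((m : ℝ)⁻¹ • (Y * Yᵀ)).det) := by
  have hm0 : (m : ℝ) ≠ 0 := by exact_mod_cast hm.ne'
  have hmpos : (0 : ℝ) < (m : ℝ)⁻¹ := by positivity
  have hYu : IsUnit Y := (Matrix.isUnit_iff_isUnit_det Y).2 hY
  have hP : (Y * Sc⁻¹ * Yᵀ).PosDef := by
    have h := (Matrix.IsUnit.posDef_star_right_conjugate_iff (x := Sc⁻¹) hYu).2 hSc.inv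
    simpa [Matrix.star_eq_conjTranspose, Matrix.conjTranspose_eq_transpose_of_trivial] using h
  have hQ : ((m : ℝ)⁻¹ • (Y * Sc⁻¹ * Yᵀ)).PosDef := hP.smul hmpos
  refine ⟨hQ, ?_⟩
  have hSd : 0 < Sc.det := hSc.det_pos
  have hQd : 0 < ((m : ℝ)⁻¹ • (Y * Sc⁻¹ * Yᵀ)).det := hQ.det_pos
  have htr : (((m : ℝ)⁻¹ • (Y * Sc⁻¹ * Yᵀ))⁻¹ * Y * Sc⁻¹ * Yᵀ).trace = (m : ℝ) ^ 2 := by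
    have h1 : ((m : ℝ)⁻¹ • (Y * Sc⁻¹ * Yᵀ))⁻¹ * Y * Sc⁻¹ * Yᵀ
        = (m : ℝ) • (1 : Matrix (Fin m) (Fin m) ℝ) := by
      have h2 := Matrix.nonsing_inv_mul ((m : ℝ)⁻¹ • (Y * Sc⁻¹ * Yᵀ)) hQd.ne'.isUnit
      rw [← h2, Matrix.mul_smul, smul_smul, mul_inv_cancel₀ hm0, one_smul]
      simp only [Matrix.mul_assoc]
    rw [h1, Matrix.trace_smul, Matrix.trace_one]
    simp [sq]
  have hdet : ((m : ℝ)⁻¹ • (Y * Sc⁻¹ * Yᵀ)).det * Sc.det = ((m : ℝ)⁻¹ • (Y * Yᵀ)).det := by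
    simp only [Matrix.det_smul, Matrix.det_mul, Matrix.det_nonsing_inv, Ring.inverse_eq_inv']
    field_simp
  rw [htr, ← hdet, Real.log_mul hQd.ne' hSd.ne']
  ring
end

section
/- Let m be a positive integer and let Y be an invertible m×m real matrix. If (D_r, D_c) is a null minimizer for Y, then for every index i, (D_r)_{ii} = (Y D_c⁻¹ Yᵗ)_{ii} / m, and for every index j, (D_c)_{jj} = (Yᵗ D_r⁻¹ Y)_{jj} / m; equivalently, D_r = (Y D_c⁻¹ Yᵗ ∘ I)/m and D_c = (Yᵗ D_r⁻¹ Y ∘ I)/m, where ∘ denotes the Hadamard (entrywise) product and I the identity matrix. -/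
open Matrix

/-- A positive diagonal matrix: a diagonal matrix with strictly positive diagonal entries. -/
def IsPosDiag {m : ℕ} (D : Matrix (Fin m) (Fin m) ℝ) : Prop :=
  D.IsDiag ∧ ∀ i, 0 < D i i

/-- The scaled log-likelihood of the mean-zero matrix normal model:
`l(Σr, Σc; Y) = tr(Σr⁻¹ Y Σc⁻¹ Yᵗ) + log det (Σc ⊗ Σr)`. -/
noncomputable def sll {m : ℕ} (Sr Sc Y : Matrix (Fin m) (Fin m) ℝ) : ℝ :=
  (Sr⁻¹ * Y * Sc⁻¹ * Yᵀ).trace + Real.log (Matrix.kroneckerMap (· * ·) Sc Sr).det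

/-- A null minimizer for `Y`: a pair of positive diagonal matrices minimizing
`l(D_r, D_c; Y)` over all pairs of positive diagonal matrices. -/
def IsNullMinimizer {m : ℕ} (Y Dr Dc : Matrix (Fin m) (Fin m) ℝ) : Prop :=
  IsPosDiag Dr ∧ IsPosDiag Dc ∧
    ∀ Dr' Dc' : Matrix (Fin m) (Fin m) ℝ, IsPosDiag Dr' → IsPosDiag Dc' →
      sll Dr Dc Y ≤ sll Dr' Dc' Y

lemma aux_one (s c r : ℝ) (hr : 0 < r)
    (h : ∀ t, 0 < t → s / r + c * Real.log r ≤ s / t + c * Real.log t) : c * r = s := by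
  have hd : HasDerivAt (fun t : ℝ => s * t⁻¹ + c * Real.log t) (s * (-(r ^ 2)⁻¹) + c * r⁻¹) r :=
    ((hasDerivAt_inv hr.ne').const_mul s).add ((Real.hasDerivAt_log hr.ne').const_mul c)
  have hmin : IsLocalMin (fun t : ℝ => s * t⁻¹ + c * Real.log t) r := by
    filter_upwards [lt_mem_nhds hr] with t ht
    simpa [div_eq_mul_inv] using h t ht
  have h0 := hmin.hasDerivAt_eq_zero hd
  field_simp at h0
  linarith

lemma aux_sll {m : ℕ} (r c : Fin m → ℝ) (hr : ∀ i, 0 < r i) (hc : ∀ i, 0 < c i)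
    (Y : Matrix (Fin m) (Fin m) ℝ) :
    sll (diagonal r) (diagonal c) Y =
      ∑ i, ((Y * (diagonal c)⁻¹ * Yᵀ) i i / r i + m * Real.log (r i))
        + m * ∑ i, Real.log (c i) := by
  have hinv : (diagonal r)⁻¹ = diagonal (fun i => (r i)⁻¹) := by
    apply Matrix.inv_eq_right_inv
    rw [diagonal_mul_diagonal, ← diagonal_one]
    congr 1
    funext i
    exact mul_inv_cancel₀ (hr i).ne'
  have hpr : (∏ i, r i) ≠ 0 := Finset.prod_ne_zero_iff.2 fun i _ => (hr i).ne'
  have hpc : (∏ i, c i) ≠ 0 := Finset.prod_ne_zero_iff.2 fun i _ => (hc i).ne'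
  have hdet : Real.log (Matrix.kroneckerMap (· * ·) (diagonal c) (diagonal r)).det
      = m * ∑ i, Real.log (c i) + m * ∑ i, Real.log (r i) := by
    rw [Matrix.det_kronecker, det_diagonal, det_diagonal,
      Real.log_mul (pow_ne_zero _ hpc) (pow_ne_zero _ hpr), Real.log_pow, Real.log_pow,
      Real.log_prod (fun i _ => (hc i).ne'), Real.log_prod (fun i _ => (hr i).ne')]
    simp
  unfold sll
  rw [hdet, hinv, Matrix.mul_assoc, Matrix.mul_assoc, ← Matrix.mul_assoc Y, Matrix.trace,
    Finset.sum_add_distrib, ← Finset.mul_sum]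
  simp only [diag_apply, diagonal_mul, div_eq_inv_mul]
  ring

lemma aux_symm {m : ℕ} (A B Y : Matrix (Fin m) (Fin m) ℝ) : sll A B Y = sll B A Yᵀ := by
  unfold sll
  rw [transpose_transpose, Matrix.det_kronecker, Matrix.det_kronecker, mul_comm (B.det ^ _),
    Matrix.mul_assoc (A⁻¹ * Y), Matrix.trace_mul_comm, Matrix.mul_assoc (B⁻¹ * Yᵀ)]

lemma aux_row {m : ℕ} (Y A B : Matrix (Fin m) (Fin m) ℝ) (hA : IsPosDiag A) (hB : IsPosDiag B)
    (h : ∀ A', IsPosDiag A' → sll A B Y ≤ sll A' B Y) (i : Fin m) :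
    m * A i i = (Y * B⁻¹ * Yᵀ) i i := by
  have eA : A = diagonal A.diag := hA.1.diagonal_diag.symm
  have eB : B = diagonal B.diag := hB.1.diagonal_diag.symm
  apply aux_one _ _ _ (hA.2 i)
  intro t ht
  have hpos : ∀ j, 0 < Function.update A.diag i t j := by
    intro j
    by_cases hj : j = i
    · subst hj; simpa using ht
    · simpa [hj] using hA.2 j
  have h1 := h (diagonal (Function.update A.diag i t))
    ⟨isDiag_diagonal _, fun j => by simpa using hpos j⟩
  have e1 := aux_sll A.diag B.diag hA.2 hB.2 Y
  have e2 := aux_sll (Function.update A.diag i t) B.diag hpos hB.2 Y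
  rw [← eB] at e1 e2
  rw [← eA] at e1
  rw [e1, e2, ← Finset.add_sum_erase _ _ (Finset.mem_univ i),
    ← Finset.add_sum_erase (a := i) _ (fun j => (Y * B⁻¹ * Yᵀ) j j / Function.update A.diag i t j
      + m * Real.log (Function.update A.diag i t j)) (Finset.mem_univ i)] at h1
  have e3 : ∑ j ∈ Finset.univ.erase i, ((Y * B⁻¹ * Yᵀ) j j / Function.update A.diag i t j
      + m * Real.log (Function.update A.diag i t j))
      = ∑ j ∈ Finset.univ.erase i, ((Y * B⁻¹ * Yᵀ) j j / A.diag j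
      + m * Real.log (A.diag j)) := by
    apply Finset.sum_congr rfl
    intro j hj
    rw [Function.update_of_ne (Finset.ne_of_mem_erase hj)]
  rw [e3, Function.update_self] at h1
  simp only [diag_apply] at h1
  linarith

lemma aux_had {m : ℕ} (A M : Matrix (Fin m) (Fin m) ℝ) (hA : IsPosDiag A)
    (h : ∀ i, A i i = M i i / m) : A = (m : ℝ)⁻¹ • Matrix.hadamard M 1 := by
  ext i j
  by_cases hij : i = j
  · subst hij
    simp [h i, div_eq_inv_mul]
  · simp [hij, hA.1 hij]

/-- A null minimizer `(D_r, D_c)` for an invertible `Y` satisfies the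
likelihood equations: `(D_r)_{ii} = (Y D_c⁻¹ Yᵗ)_{ii}/m` for all `i` and
`(D_c)_{jj} = (Yᵗ D_r⁻¹ Y)_{jj}/m` for all `j`; equivalently,
`D_r = (Y D_c⁻¹ Yᵗ ∘ I)/m` and `D_c = (Yᵗ D_r⁻¹ Y ∘ I)/m` with `∘` the Hadamard product. -/
theorem nullMinimizer_likelihood_equations
    (m : ℕ) (hm : 0 < m) (Y Dr Dc : Matrix (Fin m) (Fin m) ℝ)
    (hY : IsUnit Y.det) (h : IsNullMinimizer Y Dr Dc) :
    (∀ i, Dr i i = (Y * Dc⁻¹ * Yᵀ) i i / m) ∧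
    (∀ j, Dc j j = (Yᵀ * Dr⁻¹ * Y) j j / m) ∧
    Dr = (m : ℝ)⁻¹ • Matrix.hadamard (Y * Dc⁻¹ * Yᵀ) 1 ∧
    Dc = (m : ℝ)⁻¹ • Matrix.hadamard (Yᵀ * Dr⁻¹ * Y) 1 := by
  obtain ⟨hr, hc, hmin⟩ := h
  have hm' : (m : ℝ) ≠ 0 := by exact_mod_cast hm.ne'
  have h1 : ∀ i, Dr i i = (Y * Dc⁻¹ * Yᵀ) i i / m := by
    intro i
    rw [eq_div_iff hm', mul_comm]
    exact aux_row Y Dr Dc hr hc (fun A' hA' => hmin A' Dc hA' hc) i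
  have h2 : ∀ j, Dc j j = (Yᵀ * Dr⁻¹ * Y) j j / m := by
    intro j
    rw [eq_div_iff hm', mul_comm]
    have := aux_row Yᵀ Dc Dr hc hr (fun A' hA' => by
      rw [← aux_symm, ← aux_symm]
      exact hmin Dr A' hr hA') j
    rwa [transpose_transpose] at this
  exact ⟨h1, h2, aux_had _ _ hr h1, aux_had _ _ hc h2⟩
end

section
/- Let m be a positive integer, let Y be an invertible m×m real matrix, and let D₁ and D₂ be positive diagonal m×m matrices. Then a pair (D_r, D_c) of positive diagonal m×m matrices is a null minimizer for Y if and only if (D₁ D_r D₁, D₂ D_c D₂) is a null minimizer for D₁ Y D₂; that is, the null maximum likelihood estimate is equivariant with respect to left and right multiplication of the data by positive diagonal matrices. -/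
open Matrix

lemma IsPosDiag.det_pos {m : ℕ} {D : Matrix (Fin m) (Fin m) ℝ} (h : IsPosDiag D) :
    0 < D.det := by
  rw [← h.1.diagonal_diag, Matrix.det_diagonal]
  exact Finset.prod_pos fun i _ => h.2 i

lemma IsPosDiag.transpose_eq {m : ℕ} {D : Matrix (Fin m) (Fin m) ℝ} (h : IsPosDiag D) :
    Dᵀ = D := by
  rw [← h.1.diagonal_diag, Matrix.diagonal_transpose]

lemma IsPosDiag.mul {m : ℕ} {D E : Matrix (Fin m) (Fin m) ℝ} (h : IsPosDiag D)
    (h' : IsPosDiag E) : IsPosDiag (D * E) := by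
  have e : D * E = Matrix.diagonal (fun i => D i i * E i i) := by
    conv_lhs => rw [← h.1.diagonal_diag, ← h'.1.diagonal_diag, Matrix.diagonal_mul_diagonal]
    rfl
  rw [e]
  refine ⟨Matrix.isDiag_diagonal _, fun i => ?_⟩
  rw [Matrix.diagonal_apply_eq]
  exact mul_pos (h.2 i) (h'.2 i)

lemma IsPosDiag.exists_inv {m : ℕ} {D : Matrix (Fin m) (Fin m) ℝ} (h : IsPosDiag D) :
    IsPosDiag D⁻¹ := by
  have e : D⁻¹ = Matrix.diagonal (fun i => (D i i)⁻¹) := by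
    apply Matrix.inv_eq_right_inv
    conv_lhs => rw [← h.1.diagonal_diag]
    rw [Matrix.diagonal_mul_diagonal, ← Matrix.diagonal_one]
    congr 1
    funext i
    simp [(h.2 i).ne']
  rw [e]
  refine ⟨Matrix.isDiag_diagonal _, fun i => ?_⟩
  rw [Matrix.diagonal_apply_eq]
  exact inv_pos.2 (h.2 i)

lemma sll_scale {m : ℕ} {Y D E R C : Matrix (Fin m) (Fin m) ℝ} (hD : IsPosDiag D)
    (hE : IsPosDiag E) (hR : IsPosDiag R) (hC : IsPosDiag C) :
    sll (D * R * D) (E * C * E) (D * Y * E) =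
      sll R C Y + (Real.log ((E.det * E.det) ^ m) + Real.log ((D.det * D.det) ^ m)) := by
  have d0 := hD.det_pos
  have e0 := hE.det_pos
  have r0 := hR.det_pos
  have c0 := hC.det_pos
  have uD : IsUnit D.det := d0.ne'.isUnit
  have uE : IsUnit E.det := e0.ne'.isUnit
  have ht : ((D * R * D)⁻¹ * (D * Y * E) * (E * C * E)⁻¹ * (D * Y * E)ᵀ).trace =
      (R⁻¹ * Y * C⁻¹ * Yᵀ).trace := by
    have : (D * R * D)⁻¹ * (D * Y * E) * (E * C * E)⁻¹ * (D * Y * E)ᵀ =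
        D⁻¹ * ((R⁻¹ * Y * C⁻¹ * Yᵀ) * D) := by
      simp only [Matrix.mul_inv_rev, Matrix.transpose_mul, hD.transpose_eq, hE.transpose_eq,
        Matrix.mul_assoc, Matrix.nonsing_inv_mul_cancel_left _ _ uD,
        Matrix.mul_nonsing_inv_cancel_left _ _ uE, Matrix.nonsing_inv_mul_cancel_left _ _ uE]
    rw [this, Matrix.trace_mul_comm, Matrix.mul_assoc, Matrix.mul_nonsing_inv _ uD,
      Matrix.mul_one]
  have hk : ∀ A B : Matrix (Fin m) (Fin m) ℝ,
      (Matrix.kroneckerMap (· * ·) A B).det = A.det ^ m * B.det ^ m := by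
    intro A B
    simpa using Matrix.det_kronecker A B
  unfold sll
  rw [ht, hk, hk]
  have : (E * C * E).det ^ m * (D * R * D).det ^ m =
      (C.det ^ m * R.det ^ m) * ((E.det * E.det) ^ m * (D.det * D.det) ^ m) := by
    simp only [Matrix.det_mul, mul_pow]
    ring
  rw [this, Real.log_mul (by positivity) (by positivity),
    Real.log_mul (x := (E.det * E.det) ^ m) (by positivity) (by positivity), add_assoc]

/-- For positive diagonal `D₁`, `D₂` and invertible `Y`, a pair `(D_r, D_c)`
of positive diagonal matrices is a null minimizer for `Y` iff `(D₁ D_r D₁, D₂ D_c D₂)` is a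
null minimizer for `D₁ Y D₂`: the null MLE is equivariant under diagonal rescalings. -/
theorem nullMinimizer_equivariant
    (m : ℕ) (hm : 0 < m) (Y D₁ D₂ Dr Dc : Matrix (Fin m) (Fin m) ℝ)
    (hY : IsUnit Y.det) (hD₁ : IsPosDiag D₁) (hD₂ : IsPosDiag D₂)
    (hDr : IsPosDiag Dr) (hDc : IsPosDiag Dc) :
    IsNullMinimizer Y Dr Dc ↔
      IsNullMinimizer (D₁ * Y * D₂) (D₁ * Dr * D₁) (D₂ * Dc * D₂) := by
  constructor
  · rintro ⟨-, -, h⟩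
    refine ⟨(hD₁.mul hDr).mul hD₁, (hD₂.mul hDc).mul hD₂, fun R C hR hC => ?_⟩
    have hR' := (hD₁.exists_inv.mul hR).mul hD₁.exists_inv
    have hC' := (hD₂.exists_inv.mul hC).mul hD₂.exists_inv
    have key : ∀ D R : Matrix (Fin m) (Fin m) ℝ, IsPosDiag D →
        D * (D⁻¹ * R * D⁻¹) * D = R := by
      intro D R hD
      have uD : IsUnit D.det := hD.det_pos.ne'.isUnit
      simp only [Matrix.mul_assoc, Matrix.nonsing_inv_mul _ uD,
        Matrix.mul_nonsing_inv_cancel_left _ _ uD, Matrix.mul_one]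
    have h1 := h _ _ hR' hC'
    have h2 := sll_scale (Y := Y) hD₁ hD₂ hR' hC'
    rw [key _ _ hD₁, key _ _ hD₂] at h2
    rw [h2, sll_scale hD₁ hD₂ hDr hDc]
    linarith
  · rintro ⟨-, -, h⟩
    refine ⟨hDr, hDc, fun R C hR hC => ?_⟩
    have h1 := h _ _ ((hD₁.mul hR).mul hD₁) ((hD₂.mul hC).mul hD₂)
    rw [sll_scale hD₁ hD₂ hR hC, sll_scale hD₁ hD₂ hDr hDc] at h1
    linarith
end

section
/- Let m and p be positive integers, let Y₁, …, Y_p be invertible m×m real matrices, and let Σr and Σc be symmetric positive definite m×m real matrices. Then Σ_{i=1}^p tr(Σr⁻¹ Y_i Σc⁻¹ Y_iᵗ) + p·(m·log det Σr + m·log det Σc) ≥ Σ_{i=1}^p (m² + m·log det(Y_i Y_iᵗ / m)); that is, the scaled log-likelihood for p independent homoscedastic matrix normal observations is bounded below. -/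
open Matrix

lemma trace_lower_aux (m : ℕ) (hm : 0 < m) (M : Matrix (Fin m) (Fin m) ℝ) (hM : M.PosDef) :
    (m : ℝ) ^ 2 + m * (Real.log M.det - m * Real.log m) ≤ M.trace := by
  have hm' : (0 : ℝ) < m := by exact_mod_cast hm
  have h1 : M.trace = ∑ i, hM.1.eigenvalues i := by
    simpa using hM.1.trace_eq_sum_eigenvalues
  have h2 : M.det = ∏ i, hM.1.eigenvalues i := by
    simpa using hM.1.det_eq_prod_eigenvalues
  have h3 : Real.log M.det = ∑ i, Real.log (hM.1.eigenvalues i) := by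
    rw [h2, Real.log_prod]
    intro i _
    exact (hM.eigenvalues_pos i).ne'
  have h4 : (m : ℝ) ^ 2 + m * (Real.log M.det - m * Real.log m)
      = ∑ i, ((m : ℝ) + m * (Real.log (hM.1.eigenvalues i) - Real.log m)) := by
    rw [h3, Finset.sum_add_distrib, ← Finset.mul_sum, Finset.sum_sub_distrib]
    simp
    ring
  rw [h4, h1]
  refine Finset.sum_le_sum fun i _ => ?_
  have hp := hM.eigenvalues_pos i
  have := Real.log_le_sub_one_of_pos (div_pos hp hm')
  rw [Real.log_div hp.ne' hm'.ne'] at this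
  have h5 := mul_le_mul_of_nonneg_left this hm'.le
  have h6 : (m : ℝ) * (hM.1.eigenvalues i / m - 1) = hM.1.eigenvalues i - m := by
    field_simp
  linarith

lemma single_aux (m : ℕ) (hm : 0 < m)
    (Y : Matrix (Fin m) (Fin m) ℝ) (hY : IsUnit Y.det)
    (Sr Sc : Matrix (Fin m) (Fin m) ℝ) (hSr : Sr.PosDef) (hSc : Sc.PosDef) :
    (m : ℝ) ^ 2 + m * Real.log (((m : ℝ)⁻¹ • (Y * Yᵀ)).det)
      ≤ (Sr⁻¹ * Y * Sc⁻¹ * Yᵀ).trace + (m * Real.log Sr.det + m * Real.log Sc.det) := by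
  have hm' : (0 : ℝ) < m := by exact_mod_cast hm
  obtain ⟨B, hB⟩ : ∃ B : Matrix (Fin m) (Fin m) ℝ, Sr⁻¹ = Bᴴ * B := by
    open scoped MatrixOrder in
    exact CStarAlgebra.nonneg_iff_eq_star_mul_self.mp hSr.inv.posSemidef.nonneg
  have hr := hSr.det_pos
  have hc := hSc.det_pos
  have hdet : (Sr.det)⁻¹ = B.det * B.det := by
    have := congrArg Matrix.det hB
    simpa [Matrix.det_nonsing_inv] using this
  have hBd : B.det ≠ 0 := by
    intro h
    rw [h] at hdet
    have := inv_pos.mpr hr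
    simp at hdet
    exact hr.ne' hdet
  have hYd : Y.det ≠ 0 := hY.ne_zero
  have hBY : IsUnit (B * Y) := by
    rw [Matrix.isUnit_iff_isUnit_det, Matrix.det_mul]
    exact (mul_ne_zero hBd hYd).isUnit
  have hM : ((B * Y) * Sc⁻¹ * (B * Y)ᴴ).PosDef :=
    hSc.inv.mul_mul_conjTranspose_same (Matrix.vecMul_injective_of_isUnit hBY)
  have key := trace_lower_aux m hm _ hM
  have ht : ((B * Y) * Sc⁻¹ * (B * Y)ᴴ).trace = (Sr⁻¹ * Y * Sc⁻¹ * Yᵀ).trace := by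
    rw [hB, Matrix.conjTranspose_mul, ← Matrix.mul_assoc, Matrix.trace_mul_comm]
    simp [Matrix.mul_assoc]
  have hd : ((B * Y) * Sc⁻¹ * (B * Y)ᴴ).det = (Y.det * Y.det) / (Sr.det * Sc.det) := by
    have : (Sr.det * Sc.det)⁻¹ = B.det * B.det * Sc.det⁻¹ := by rw [mul_inv, hdet]
    rw [div_eq_mul_inv, this]
    simp [Matrix.det_nonsing_inv]
    ring
  have hl : Real.log (((m : ℝ)⁻¹ • (Y * Yᵀ)).det)
      = Real.log (Y.det * Y.det) - m * Real.log m := by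
    rw [Matrix.det_smul, Matrix.det_mul, Matrix.det_transpose,
      Real.log_mul (by positivity) (mul_ne_zero hYd hYd)]
    simp
    ring
  rw [ht, hd, Real.log_div (mul_ne_zero hYd hYd) (by positivity),
    Real.log_mul hr.ne' hc.ne'] at key
  rw [hl]
  linarith

/-- For positive integers `m`, `p`, invertible `m × m` real matrices
`Y₁, …, Y_p`, and symmetric positive definite `Σr`, `Σc`, the scaled log-likelihood of `p`
i.i.d. mean-zero matrix normal observations is bounded below:
`Σᵢ tr(Σr⁻¹ Yᵢ Σc⁻¹ Yᵢᵗ) + p(m·log det Σr + m·log det Σc) ≥ Σᵢ (m² + m·log det(Yᵢ Yᵢᵗ/m))`. -/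
theorem matrixNormal_iid_scaledLogLik_lower_bound
    (m p : ℕ) (hm : 0 < m) (hp : 0 < p)
    (Y : Fin p → Matrix (Fin m) (Fin m) ℝ) (hY : ∀ i, IsUnit (Y i).det)
    (Sr Sc : Matrix (Fin m) (Fin m) ℝ) (hSr : Sr.PosDef) (hSc : Sc.PosDef) :
    ∑ i, (Sr⁻¹ * Y i * Sc⁻¹ * (Y i)ᵀ).trace
        + p * (m * Real.log Sr.det + m * Real.log Sc.det)
      ≥ ∑ i, ((m : ℝ) ^ 2 + m * Real.log (((m : ℝ)⁻¹ • (Y i * (Y i)ᵀ)).det)) := by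

  have h : (p : ℝ) * (m * Real.log Sr.det + m * Real.log Sc.det)
      = ∑ _i : Fin p, (m * Real.log Sr.det + m * Real.log Sc.det) := by
    simp
    ring
  rw [h, ← Finset.sum_add_distrib]
  exact Finset.sum_le_sum fun i _ => single_aux m hm (Y i) (hY i) Sr Sc hSr hSc
end

section
/- Let m and p be positive integers and let Y₁, …, Y_p be invertible m×m real matrices. Then the function L(d, Σr, Σc) = Σ_{i=1}^p (1/d_i)·tr(Y_i Σc⁻¹ Y_iᵗ Σr⁻¹) + m·p·log det Σr + m·p·log det Σc + m²·Σ_{i=1}^p log d_i is bounded below over all d = (d₁, …, d_p) with each d_i > 0 and all symmetric positive definite m×m real matrices Σr and Σc; that is, there exists a real constant c such that L(d, Σr, Σc) ≥ c for all such (d, Σr, Σc). -/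
open Matrix

/-- The scaled log-likelihood of `p` independent heteroscedastic matrix normal observations
`Y_i ~ N(0, d_i·Σr, Σc)`:
`L(d, Σr, Σc) = Σᵢ (1/dᵢ)·tr(Yᵢ Σc⁻¹ Yᵢᵗ Σr⁻¹) + mp·log det Σr + mp·log det Σc + m²·Σᵢ log dᵢ`. -/
noncomputable def hetL {m p : ℕ} (Y : Fin p → Matrix (Fin m) (Fin m) ℝ)
    (d : Fin p → ℝ) (Sr Sc : Matrix (Fin m) (Fin m) ℝ) : ℝ :=
  ∑ i, (d i)⁻¹ * (Y i * Sc⁻¹ * (Y i)ᵀ * Sr⁻¹).trace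
    + m * p * Real.log Sr.det + m * p * Real.log Sc.det
    + (m : ℝ) ^ 2 * ∑ i, Real.log (d i)

open scoped MatrixOrder Matrix.Norms.L2Operator in
lemma exists_factor {m : ℕ} {B : Matrix (Fin m) (Fin m) ℝ} (hB : B.PosDef) :
    ∃ C : Matrix (Fin m) (Fin m) ℝ, B = Cᴴ * C := by
  obtain ⟨C, hC⟩ := CStarAlgebra.nonneg_iff_eq_star_mul_self.mp hB.posSemidef.nonneg
  exact ⟨C, hC⟩

lemma trace_bound {m : ℕ} (hm : 0 < m) {M : Matrix (Fin m) (Fin m) ℝ} (hM : M.PosDef)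
    {d : ℝ} (hd : 0 < d) :
    (m : ℝ) ^ 2 - (m : ℝ) ^ 2 * Real.log m + m * Real.log M.det - (m : ℝ) ^ 2 * Real.log d
      ≤ d⁻¹ * M.trace := by
  have hm' : (0 : ℝ) < m := by exact_mod_cast hm
  have hdet : M.det = ∏ i, hM.1.eigenvalues i := by simpa using hM.1.det_eq_prod_eigenvalues
  have htr : M.trace = ∑ i, hM.1.eigenvalues i := by simpa using hM.1.trace_eq_sum_eigenvalues
  have key : ∀ i, 1 + Real.log (hM.1.eigenvalues i) - Real.log d - Real.log m
      ≤ hM.1.eigenvalues i / (d * m) := by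
    intro i
    have hl := hM.eigenvalues_pos i
    have h := Real.log_le_sub_one_of_pos (div_pos hl (mul_pos hd hm'))
    rw [Real.log_div hl.ne' (mul_pos hd hm').ne', Real.log_mul hd.ne' hm'.ne'] at h
    linarith
  have hs := Finset.sum_le_sum (fun i (_ : i ∈ Finset.univ) => key i)
  rw [← Finset.sum_div, ← htr] at hs
  simp only [Finset.sum_sub_distrib, Finset.sum_add_distrib, Finset.sum_const, Finset.card_univ,
    Fintype.card_fin, nsmul_eq_mul] at hs
  rw [← Real.log_prod (fun i _ => (hM.eigenvalues_pos i).ne'), ← hdet] at hs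
  have h2 := mul_le_mul_of_nonneg_left hs hm'.le
  have e : (m : ℝ) * (M.trace / (d * m)) = d⁻¹ * M.trace := by field_simp
  rw [e] at h2
  linarith

lemma term_bound {m : ℕ} (hm : 0 < m) {Y Sr Sc : Matrix (Fin m) (Fin m) ℝ} (hY : IsUnit Y.det)
    (hr : Sr.PosDef) (hc : Sc.PosDef) {d : ℝ} (hd : 0 < d) :
    (m : ℝ) ^ 2 - (m : ℝ) ^ 2 * Real.log m + m * (2 * Real.log Y.det)
      ≤ d⁻¹ * (Y * Sc⁻¹ * Yᵀ * Sr⁻¹).trace + m * Real.log Sr.det + m * Real.log Sc.det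
        + (m : ℝ) ^ 2 * Real.log d := by
  obtain ⟨C, hC⟩ := exists_factor hr.inv
  have hdr := hr.det_pos
  have hdc := hc.det_pos
  have hdetC : C.det * C.det = (Sr.det)⁻¹ := by
    have := congrArg Matrix.det hC
    rw [Matrix.det_nonsing_inv, Ring.inverse_eq_inv', Matrix.det_mul, Matrix.det_conjTranspose] at this
    simpa using this.symm
  have hC0 : C.det ≠ 0 := by
    intro h
    rw [h] at hdetC
    have := inv_pos.mpr hdr
    simp at hdetC
    exact hdr.ne' hdetC.symm
  have hY0 : Y.det ≠ 0 := hY.ne_zero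
  have hM : ((C * Y) * Sc⁻¹ * (C * Y)ᴴ).PosDef := by
    apply hc.inv.mul_mul_conjTranspose_same
    apply Matrix.vecMul_injective_of_isUnit
    rw [Matrix.isUnit_iff_isUnit_det, Matrix.det_mul]
    exact (mul_ne_zero hC0 hY0).isUnit
  have h := trace_bound hm hM hd
  have htr : ((C * Y) * Sc⁻¹ * (C * Y)ᴴ).trace = (Y * Sc⁻¹ * Yᵀ * Sr⁻¹).trace := by
    rw [hC, ← Matrix.mul_assoc, Matrix.trace_mul_comm _ C]
    simp [Matrix.conjTranspose_mul, Matrix.mul_assoc]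
  have hdet : ((C * Y) * Sc⁻¹ * (C * Y)ᴴ).det = Y.det * Y.det * (Sr.det)⁻¹ * (Sc.det)⁻¹ := by
    rw [← hdetC, Matrix.det_mul, Matrix.det_mul, Matrix.det_conjTranspose, Matrix.det_mul,
      Matrix.det_nonsing_inv, Ring.inverse_eq_inv', star_trivial]
    ring
  rw [htr, hdet, Real.log_mul (by positivity) (by positivity),
    Real.log_mul (by positivity) (by positivity), Real.log_mul hY0 hY0, Real.log_inv,
    Real.log_inv] at h
  linarith

/-- For positive integers `m`, `p` and invertible `m × m` real matrices
`Y₁, …, Y_p`, the heteroscedastic scaled log-likelihood `L(d, Σr, Σc)` is bounded below over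
all positive `d₁, …, d_p` and symmetric positive definite `Σr`, `Σc`. -/
theorem hetL_bounded_below
    (m p : ℕ) (hm : 0 < m) (hp : 0 < p)
    (Y : Fin p → Matrix (Fin m) (Fin m) ℝ) (hY : ∀ i, IsUnit (Y i).det) :
    ∃ c : ℝ, ∀ (d : Fin p → ℝ) (Sr Sc : Matrix (Fin m) (Fin m) ℝ),
      (∀ i, 0 < d i) → Sr.PosDef → Sc.PosDef → c ≤ hetL Y d Sr Sc := by
  refine ⟨∑ i, ((m : ℝ) ^ 2 - (m : ℝ) ^ 2 * Real.log m + m * (2 * Real.log (Y i).det)), ?_⟩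
  intro d Sr Sc hd hr hc
  refine (Finset.sum_le_sum (fun i _ => term_bound hm (hY i) hr hc (hd i))).trans (le_of_eq ?_)
  simp only [hetL, Finset.sum_add_distrib, Finset.sum_const, Finset.card_univ,
    Fintype.card_fin, nsmul_eq_mul, Finset.mul_sum]
  ring
end

section
/- Let m and p be positive integers, let Y₁, …, Y_p be nonzero m×m real matrices, and let Σr and Σc be symmetric positive definite m×m real matrices, so that A_i := tr(Y_i Σc⁻¹ Y_iᵗ Σr⁻¹) > 0 for each i. Then the infimum of L(d, Σr, Σc) over all d = (d₁, …, d_p) with each d_i > 0 equals m²·p + m·p·log det Σr + m·p·log det Σc + m²·Σ_{i=1}^p log(A_i / m²), and this infimum is attained at d_i = A_i / m² for each i. -/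
open Matrix

open scoped MatrixOrder ComplexOrder in
lemma hetL_aux_pos {m : ℕ} (Y P Q : Matrix (Fin m) (Fin m) ℝ) (hY : Y ≠ 0)
    (hP : P.PosDef) (hQ : Q.PosDef) : 0 < (Y * P * Yᵀ * Q).trace := by
  obtain ⟨b, hb, rfl⟩ := CStarAlgebra.isStrictlyPositive_iff_eq_star_mul_self.mp
    hP.isStrictlyPositive
  obtain ⟨c, hc, rfl⟩ := CStarAlgebra.isStrictlyPositive_iff_eq_star_mul_self.mp
    hQ.isStrictlyPositive
  have key : (Y * (star b * b) * Yᵀ * (star c * c)).trace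
      = ((c * Y * star b) * (c * Y * star b)ᴴ).trace := by
    have e : Y * (star b * b) * Yᵀ * (star c * c)
        = (Y * (star b * b) * Yᵀ * star c) * c := by simp only [mul_assoc]
    rw [e, Matrix.trace_mul_comm]
    simp only [star_eq_conjTranspose,
      conjTranspose_eq_transpose_of_trivial, transpose_mul, transpose_transpose, mul_assoc]
  rw [key]
  have h0 : 0 ≤ ((c * Y * star b) * (c * Y * star b)ᴴ).trace :=
    (Matrix.posSemidef_self_mul_conjTranspose _).trace_nonneg
  refine lt_of_le_of_ne h0 (fun h => hY ?_)
  have h1 := trace_mul_conjTranspose_self_eq_zero_iff.mp h.symm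
  have hb' : IsUnit (star b) := hb.star
  have h2 : c * Y = 0 := hb'.mul_left_eq_zero.mp h1
  exact hc.mul_right_eq_zero.mp h2

lemma hetL_aux_scalar (a d M : ℝ) (ha : 0 < a) (hd : 0 < d) (hM : 0 < M) :
    M + M * Real.log (a / M) ≤ d⁻¹ * a + M * Real.log d := by
  have h := Real.log_le_sub_one_of_pos (show 0 < a / M / d by positivity)
  rw [Real.log_div (by positivity) (by positivity)] at h
  have h2 := mul_le_mul_of_nonneg_left h hM.le
  have e : M * (a / M / d - 1) = d⁻¹ * a - M := by field_simp
  rw [e] at h2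
  linarith

/-- For nonzero `Y₁, …, Y_p` and symmetric positive definite `Σr`, `Σc`, set
`A_i = tr(Yᵢ Σc⁻¹ Yᵢᵗ Σr⁻¹)`, which is positive.  The infimum of `L(d, Σr, Σc)` over positive
`d` equals `m²p + mp·log det Σr + mp·log det Σc + m²·Σᵢ log(A_i/m²)` and is attained at
`d_i = A_i/m²`. -/
theorem hetL_profile_in_d
    (m p : ℕ) (hm : 0 < m) (hp : 0 < p)
    (Y : Fin p → Matrix (Fin m) (Fin m) ℝ) (hY : ∀ i, Y i ≠ 0)
    (Sr Sc : Matrix (Fin m) (Fin m) ℝ) (hSr : Sr.PosDef) (hSc : Sc.PosDef)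
    (A : Fin p → ℝ) (hA : ∀ i, A i = (Y i * Sc⁻¹ * (Y i)ᵀ * Sr⁻¹).trace) :
    (∀ i, 0 < A i) ∧
    IsLeast {x : ℝ | ∃ d : Fin p → ℝ, (∀ i, 0 < d i) ∧ x = hetL Y d Sr Sc}
      ((m : ℝ) ^ 2 * p + m * p * Real.log Sr.det + m * p * Real.log Sc.det
        + (m : ℝ) ^ 2 * ∑ i, Real.log (A i / (m : ℝ) ^ 2)) ∧
    hetL Y (fun i => A i / (m : ℝ) ^ 2) Sr Sc
      = (m : ℝ) ^ 2 * p + m * p * Real.log Sr.det + m * p * Real.log Sc.det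
        + (m : ℝ) ^ 2 * ∑ i, Real.log (A i / (m : ℝ) ^ 2) := by
  have hpos : ∀ i, 0 < A i := fun i => by
    rw [hA i]; exact hetL_aux_pos _ _ _ (hY i) hSc.inv hSr.inv
  have hM : (0 : ℝ) < (m : ℝ) ^ 2 := by positivity
  have heq : hetL Y (fun i => A i / (m : ℝ) ^ 2) Sr Sc
      = (m : ℝ) ^ 2 * p + m * p * Real.log Sr.det + m * p * Real.log Sc.det
        + (m : ℝ) ^ 2 * ∑ i, Real.log (A i / (m : ℝ) ^ 2) := by
    unfold hetL
    have : ∀ i, (A i / (m : ℝ) ^ 2)⁻¹ * (Y i * Sc⁻¹ * (Y i)ᵀ * Sr⁻¹).trace = (m : ℝ) ^ 2 := by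
      intro i
      rw [← hA i]
      have := (hpos i).ne'
      field_simp
    simp only [this, Finset.sum_const, Finset.card_univ, Fintype.card_fin, nsmul_eq_mul]
    ring
  refine ⟨hpos, ⟨⟨_, fun i => div_pos (hpos i) hM, heq.symm⟩, ?_⟩, heq⟩
  rintro x ⟨d, hd, rfl⟩
  have h := Finset.sum_le_sum (s := Finset.univ)
    (fun i _ => hetL_aux_scalar (A i) (d i) _ (hpos i) (hd i) hM)
  simp only [Finset.sum_add_distrib, ← Finset.mul_sum, Finset.sum_const, Finset.card_univ,
    Fintype.card_fin, nsmul_eq_mul] at h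
  unfold hetL
  simp only [← hA]
  linarith
end
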